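/- arXiv:1812.00830 — 4 statements merged into one kernel-verified Lean document; each statement's English description precedes it below -/
import Mathlib

section
/- Let (R,𝔪) be a noetherian local ring which is quasi-reduced, i.e., every associated prime of R is a minimal prime (Serre's condition S₁) and for every minimal prime 𝔭 the localization R_𝔭 is injective as a module over itself (R is generically Gorenstein). Then every finitely generated reflexive R-module is free if and only if R is a regular local ring of Krull dimension at most two. -/
section Aux
open IsLocalRing

/-- a prime inside (x), not containing x, is zero -/
lemma aux_prime_bot {R : Type*} [CommRing R] [IsNoetherianRing R] [IsLocalRing R] {x : R}
    (hx : x ∈ maximalIdeal R) (p : Ideal R) [hp : p.IsPrime] (hle : p ≤ Ideal.span {x})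
    (hxp : x ∉ p) : p = ⊥ := by
  apply Submodule.eq_bot_of_le_smul_of_le_jacobson_bot (Ideal.span {x}) p
    (IsNoetherian.noetherian p)
  · intro a ha
    obtain ⟨b, rfl⟩ := Ideal.mem_span_singleton'.mp (hle ha)
    have hb : b ∈ p := (hp.mem_or_mem ha).resolve_right hxp
    rw [mul_comm]
    exact Submodule.smul_mem_smul (Ideal.mem_span_singleton_self x) hb
  · rw [Ideal.span_le, Set.singleton_subset_iff]
    exact IsLocalRing.maximalIdeal_le_jacobson _ hx

lemma aux_pir {R : Type*} [CommRing R] [IsNoetherianRing R] [IsLocalRing R] {y : R}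
    (hy : maximalIdeal R = Ideal.span {y}) : IsPrincipalIdealRing R := by
  apply IsPrincipalIdealRing.of_prime
  intro p hp
  by_cases h : y ∈ p
  · have : p = Ideal.span {y} := by
      apply le_antisymm
      · rw [← hy]; exact le_maximalIdeal hp.ne_top
      · simpa [Ideal.span_le] using h
    exact ⟨y, this⟩
  · rw [aux_prime_bot (x := y) (by rw [hy]; exact Ideal.mem_span_singleton_self y) p
      (hy ▸ le_maximalIdeal hp.ne_top) h]
    infer_instance

lemma aux_dom {R : Type*} [CommRing R] [IsNoetherianRing R] [IsLocalRing R] {y : R}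
    (hy : maximalIdeal R = Ideal.span {y}) (p : Ideal R) [hp : p.IsPrime]
    (hne : p ≠ maximalIdeal R) : IsDomain R := by
  have hpb : p = ⊥ := by
    apply aux_prime_bot (x := y) (by rw [hy]; exact Ideal.mem_span_singleton_self y) p
      (hy ▸ le_maximalIdeal hp.ne_top)
    intro h
    apply hne
    apply le_antisymm (le_maximalIdeal hp.ne_top)
    rw [hy]; simpa [Ideal.span_le] using h
  subst hpb
  exact IsDomain.of_bot_isPrime R

lemma aux_pid_free {R : Type*} [CommRing R] [IsNoetherianRing R] [IsLocalRing R] [IsDomain R] {y : R}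
    (hy : maximalIdeal R = Ideal.span {y}) (M : Type*) [AddCommGroup M] [Module R M]
    [Module.Finite R M] [Module.IsTorsionFree R M] : Module.Free R M := by
  have := aux_pir hy
  infer_instance

lemma aux_quot_local {R : Type*} [CommRing R] [IsLocalRing R] {x : R}
    (hx : x ∈ maximalIdeal R) : IsLocalRing (R ⧸ Ideal.span {x}) := by
  have hle : Ideal.span {x} ≤ maximalIdeal R := by simpa [Ideal.span_le] using hx
  have : Nontrivial (R ⧸ Ideal.span {x}) := Ideal.Quotient.nontrivial_iff.mpr (by
    intro h; rw [h] at hle; exact (maximalIdeal.isMaximal R).ne_top (top_le_iff.mp hle))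
  exact IsLocalRing.of_surjective' (Ideal.Quotient.mk _) Ideal.Quotient.mk_surjective

lemma aux_quot_max {R : Type*} [CommRing R] [IsLocalRing R] {x y : R}
    [IsLocalRing (R ⧸ Ideal.span {x})]
    (hxy : maximalIdeal R = Ideal.span {x, y}) : maximalIdeal (R ⧸ Ideal.span {x}) =
      Ideal.span {Ideal.Quotient.mk (Ideal.span {x}) y} := by
  rw [← IsLocalRing.map_maximalIdeal_of_surjective (Ideal.Quotient.mk (Ideal.span {x}))
    Ideal.Quotient.mk_surjective, hxy, Ideal.map_span, Set.image_pair]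
  have : Ideal.Quotient.mk (Ideal.span {x}) x = 0 :=
    Ideal.Quotient.eq_zero_iff_mem.mpr (Ideal.mem_span_singleton_self x)
  rw [this, Ideal.span_insert_zero]

/-- in dimension 2 with m = (x,y), (x) is prime -/
lemma aux_span_prime {R : Type*} [CommRing R] [IsNoetherianRing R] [IsLocalRing R] {x y : R}
    (hxy : maximalIdeal R = Ideal.span {x, y}) (hd : ringKrullDim R = 2) :
    (Ideal.span {x}).IsPrime ∧ Ideal.span {x} ≠ maximalIdeal R := by
  have hxm : x ∈ maximalIdeal R := by rw [hxy]; exact Ideal.subset_span (by simp)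
  have hle : Ideal.span {x} ≤ maximalIdeal R := by simpa [Ideal.span_le] using hxm
  have hmin : maximalIdeal R ∉ (Ideal.span {x}).minimalPrimes := by
    intro h
    have h1 := Ideal.height_le_one_of_isPrincipal_of_mem_minimalPrimes _ _ h
    have h2 := IsLocalRing.maximalIdeal_height_eq_ringKrullDim (R := R)
    rw [hd] at h2
    have : (maximalIdeal R).height = 2 := WithBot.coe_injective h2
    rw [this] at h1
    exact absurd h1 (by decide)
  obtain ⟨p, hp, hpm⟩ := Ideal.exists_minimalPrimes_le hle
  have hpne : p ≠ maximalIdeal R := fun h => hmin (h ▸ hp)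
  have hpp : p.IsPrime := hp.1.1
  have hloc := aux_quot_local hxm
  have hmm : (maximalIdeal R).map (Ideal.Quotient.mk (Ideal.span {x})) =
      maximalIdeal (R ⧸ Ideal.span {x}) := by
    exact IsLocalRing.map_maximalIdeal_of_surjective _ Ideal.Quotient.mk_surjective
  have hy' := aux_quot_max hxy
  have hker : RingHom.ker (Ideal.Quotient.mk (Ideal.span {x})) ≤ p := by
    rw [Ideal.mk_ker]; exact hp.1.2
  have : (p.map (Ideal.Quotient.mk (Ideal.span {x}))).IsPrime :=
    Ideal.map_isPrime_of_surjective Ideal.Quotient.mk_surjective hker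
  have hdom := aux_dom hy' (p.map (Ideal.Quotient.mk (Ideal.span {x}))) (by
    intro h
    apply hpne
    rw [← hmm] at h
    have h := congrArg (Ideal.comap (Ideal.Quotient.mk (Ideal.span {x}))) h
    rw [Ideal.comap_map_of_surjective' _ Ideal.Quotient.mk_surjective,
      Ideal.comap_map_of_surjective' _ Ideal.Quotient.mk_surjective,
      sup_eq_left.mpr hker, sup_eq_left.mpr (by rwa [Ideal.mk_ker])] at h
    exact h)
  have hpr : (Ideal.span {x}).IsPrime := (Ideal.Quotient.isDomain_iff_prime _).mp hdom
  refine ⟨hpr, fun h => hpne ?_⟩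
  exact le_antisymm hpm (h ▸ hp.1.2)

lemma aux_exists_x {R : Type*} [CommRing R] [IsNoetherianRing R] [IsLocalRing R] {x y : R}
    (hxy : maximalIdeal R = Ideal.span {x, y}) (hd : ringKrullDim R = 2) :
    ∃ z : R, maximalIdeal R = Ideal.span {z, y} ∧ Ideal.span {z} ∉ minimalPrimes R := by
  have key : ∀ n : ℕ, maximalIdeal R = Ideal.span {x + y ^ (n + 1), y} := by
    intro n
    rw [hxy]
    apply le_antisymm
    · rw [Ideal.span_le, Set.pair_subset_iff]
      refine ⟨?_, Ideal.subset_span (by simp)⟩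
      exact Ideal.mem_span_pair.mpr ⟨1, -y ^ n, by ring⟩
    · rw [Ideal.span_le, Set.pair_subset_iff]
      refine ⟨?_, Ideal.subset_span (by simp)⟩
      exact Ideal.mem_span_pair.mpr ⟨1, y ^ n, by ring⟩
  by_contra! hcon
  have hall : ∀ n : ℕ, Ideal.span {x + y ^ (n + 1)} ∈ minimalPrimes R := fun n => hcon _ (key n)
  have hfin := minimalPrimes.finite_of_isNoetherianRing R
  have := hfin.to_subtype
  obtain ⟨a, b, hab, he⟩ := Finite.exists_ne_map_eq_of_infinite
    (fun n : ℕ => (⟨_, hall n⟩ : minimalPrimes R))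
  wlog hlt : a < b generalizing a b
  · exact this b a hab.symm he.symm (by omega)
  have he : Ideal.span {x + y ^ (a + 1)} = Ideal.span {x + y ^ (b + 1)} := congrArg Subtype.val he
  obtain ⟨hp, hne⟩ := aux_span_prime (key a) hd
  have h1 : x + y ^ (a + 1) ∈ Ideal.span {x + y ^ (a + 1)} := Ideal.mem_span_singleton_self _
  have h2 : x + y ^ (b + 1) ∈ Ideal.span {x + y ^ (a + 1)} := he ▸ Ideal.mem_span_singleton_self _
  have hym : y ∈ maximalIdeal R := by rw [hxy]; exact Ideal.subset_span (by simp)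
  obtain ⟨c, rfl⟩ : ∃ c, b = a + c + 1 := ⟨b - a - 1, by omega⟩
  have h3 : y ^ (a + 1) * (1 - y ^ (c + 1)) ∈ Ideal.span {x + y ^ (a + 1)} := by
    have := Ideal.sub_mem _ h1 h2
    ring_nf at this ⊢
    exact this
  have hunit : IsUnit (1 - y ^ (c + 1)) :=
    IsLocalRing.isUnit_one_sub_self_of_mem_nonunits _
      ((mem_maximalIdeal _).mp (Ideal.pow_mem_of_mem _ hym _ (by omega)))
  have hy : y ∈ Ideal.span {x + y ^ (a + 1)} := by
    rcases hp.mem_or_mem h3 with h | h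
    · exact hp.mem_of_pow_mem _ h
    · exact absurd (Ideal.eq_top_of_isUnit_mem _ h hunit) hp.ne_top
  apply hne
  apply le_antisymm (le_maximalIdeal hp.ne_top)
  rw [key a, Ideal.span_le, Set.pair_subset_iff]
  exact ⟨h1, hy⟩

lemma aux_dim_two {R : Type*} [CommRing R] [IsNoetherianRing R] [IsLocalRing R] {x y : R}
    (hxy : maximalIdeal R = Ideal.span {x, y}) (hd : ringKrullDim R = 2)
    (M : Type*) [AddCommGroup M] [Module R M] [Module.Finite R M] [Module.IsReflexive R M] :
    Module.Free R M := by
  obtain ⟨z, hz, hzmin⟩ := aux_exists_x hxy hd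
  obtain ⟨hp, hne⟩ := aux_span_prime hz hd
  have hzm : z ∈ maximalIdeal R := by rw [hz]; exact Ideal.subset_span (by simp)
  obtain ⟨q, hq, hqz⟩ := Ideal.exists_minimalPrimes_le (bot_le (a := Ideal.span {z}))
  have hqp : q.IsPrime := hq.1.1
  have hqne : q ≠ Ideal.span {z} := fun h => hzmin (h ▸ hq)
  have hzq : z ∉ q := fun h => hqne (le_antisymm hqz (by simpa [Ideal.span_le] using h))
  have hqb : q = ⊥ := aux_prime_bot hzm q hqz hzq
  subst hqb
  have hdom : IsDomain R := IsDomain.of_bot_isPrime R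
  have hz0 : z ≠ 0 := fun h => hzq (by simp [h])
  have hloc := aux_quot_local hzm
  have hdom' : IsDomain (R ⧸ Ideal.span {z}) := (Ideal.Quotient.isDomain_iff_prime _).mpr hp
  have hmax := aux_quot_max hz
  have hreg : IsSMulRegular M z := Module.IsTorsionFree.isSMulRegular (IsRegular.of_ne_zero hz0)
  have hfp : Module.FinitePresentation R M := Module.finitePresentation_of_finite R M
  rw [← Module.free_quotSMulTop_iff_free R M (x := z)
    (IsLocalRing.maximalIdeal_le_jacobson _ hzm) hreg]
  have : Module.Finite (R ⧸ Ideal.span {z}) (QuotSMulTop z M) :=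
    Module.Finite.of_restrictScalars_finite R _ _
  have htf : Module.IsTorsionFree (R ⧸ Ideal.span {z}) (QuotSMulTop z M) := by
    refine ⟨fun r hr => ?_⟩
    obtain ⟨r, rfl⟩ := Ideal.Quotient.mk_surjective r
    rw [isSMulRegular_iff_right_eq_zero_of_smul]
    intro m hm
    obtain ⟨m, rfl⟩ := Submodule.Quotient.mk_surjective _ m
    have hrz : r ∉ Ideal.span {z} := fun h => hr.ne_zero (Ideal.Quotient.eq_zero_iff_mem.mpr h)
    have hm' : (Submodule.Quotient.mk (r • m) : QuotSMulTop z M) = 0 := hm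
    rw [Submodule.Quotient.mk_eq_zero, Submodule.mem_smul_pointwise_iff_exists] at hm'
    obtain ⟨m', -, hm'⟩ := hm'
    have hdiv : ∀ f : Module.Dual R M, ∃ c, f m = z * c := by
      intro f
      have h1 : r * f m = z * f m' := by
        have := congrArg f hm'
        simpa using this.symm
      have h2 : r * f m ∈ Ideal.span {z} := by
        rw [h1]; exact Ideal.mul_mem_right _ _ (Ideal.mem_span_singleton_self z)
      exact Ideal.mem_span_singleton.mp ((hp.mem_or_mem h2).resolve_left hrz)
    choose g hg using hdiv
    let G : Module.Dual R (Module.Dual R M) :=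
      { toFun := g
        map_add' := fun a b => mul_left_cancel₀ hz0 (by
          rw [← hg, mul_add, ← hg, ← hg]; rfl)
        map_smul' := fun a b => mul_left_cancel₀ hz0 (by
          rw [← hg, RingHom.id_apply, smul_eq_mul, mul_left_comm, ← hg]; rfl) }
    obtain ⟨m'', hm''⟩ := (Module.bijective_dual_eval R M).2 G
    have : m = z • m'' := by
      apply (Module.bijective_dual_eval R M).1
      ext f
      have := congrArg (fun φ => φ f) hm''
      simp only [Module.Dual.eval_apply] at this ⊢
      rw [map_smul, this, hg f]
      rfl
    rw [Submodule.Quotient.mk_eq_zero, Submodule.mem_smul_pointwise_iff_exists]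
    exact ⟨m'', trivial, this.symm⟩
  exact aux_pid_free hmax _

lemma aux_backward {R : Type*} [CommRing R] [IsNoetherianRing R] [IsLocalRing R]
    (s : Finset R) (hs : Ideal.span (s : Set R) = maximalIdeal R)
    (hc : (s.card : WithBot ℕ∞) = ringKrullDim R) (h2 : ringKrullDim R ≤ 2)
    (M : Type*) [AddCommGroup M] [Module R M] [Module.Finite R M] [Module.IsReflexive R M] :
    Module.Free R M := by
  classical
  have hle : s.card ≤ 2 := by
    rw [← hc] at h2
    exact_mod_cast h2
  have h3 : s.card = 0 ∨ s.card = 1 ∨ s.card = 2 := by omega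
  rcases h3 with h | h | h
  · rw [Finset.card_eq_zero] at h
    subst h
    have hb : maximalIdeal R = ⊥ := by simpa using hs.symm
    have : (⊥ : Ideal R).IsPrime := hb ▸ inferInstance
    have := IsDomain.of_bot_isPrime R
    exact aux_pid_free (y := 0) (by simpa using hb) M
  · rw [h] at hc
    obtain ⟨y, rfl⟩ := Finset.card_eq_one.mp h
    have hy : maximalIdeal R = Ideal.span {y} := by simpa using hs.symm
    have : IsDomain R := by
      obtain ⟨p, hp, hpm⟩ := Ideal.exists_minimalPrimes_le (bot_le (a := maximalIdeal R))
      have : p.IsPrime := hp.1.1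
      apply aux_dom hy p
      rintro rfl
      have h0 := Ideal.height_eq_zero_iff.mpr hp
      have h2 := IsLocalRing.maximalIdeal_height_eq_ringKrullDim (R := R)
      rw [h0, ← hc] at h2
      exact absurd h2 (by decide)
    exact aux_pid_free hy M
  · rw [h] at hc
    obtain ⟨x, y, -, rfl⟩ := Finset.card_eq_two.mp h
    exact aux_dim_two (x := x) (y := y) (by simpa using hs.symm) (by rw [← hc]; rfl) M

lemma aux_extend {R : Type u} [CommRing R] [IsNoetherianRing R] (p : Ideal R) [p.IsPrime]
    (hinj : Module.Injective (Localization.AtPrime p) (Localization.AtPrime p))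
    {K F : Type u} [AddCommGroup K] [Module R K] [AddCommGroup F] [Module R F]
    [Module.Finite R F] [Module.Free R F] (i : K →ₗ[R] F) (hi : Function.Injective i)
    (f : K →ₗ[R] R) : ∃ s : R, s ∉ p ∧ ∃ h : F →ₗ[R] R, ∀ k, s * f k = h (i k) := by
  let A := Localization.AtPrime p
  let S := p.primeCompl
  -- extend K → R → R_p to F
  obtain ⟨g, hg⟩ : ∃ g : F →ₗ[R] A, ∀ k, g (i k) = algebraMap R A (f k) := by
    let f' : LocalizedModule S K →ₗ[R] A :=
      IsLocalizedModule.lift S (LocalizedModule.mkLinearMap S K) ((Algebra.linearMap R A) ∘ₗ f)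
        (fun x => IsLocalizedModule.map_units (Algebra.linearMap R A) x)
    obtain ⟨h, hh⟩ := hinj.out (LocalizedModule.map S i) (LocalizedModule.map_injective S i hi)
      (f'.extendScalarsOfIsLocalization S A)
    refine ⟨(h.restrictScalars R) ∘ₗ LocalizedModule.mkLinearMap S F, fun k => ?_⟩
    have := hh (LocalizedModule.mkLinearMap S K k)
    rw [LinearMap.extendScalarsOfIsLocalization_apply'] at this
    simp only [f', IsLocalizedModule.lift_apply] at this
    simpa [LocalizedModule.map_mk] using this
  let b := Module.Free.chooseBasis R F
  obtain ⟨s, hs⟩ := IsLocalization.exist_integer_multiples_of_finite S (fun j => g (b j))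
  choose a ha using hs
  let h : F →ₗ[R] R := b.constr R a
  have hh : ∀ v, algebraMap R A (h v) = (s : R) • g v := by
    have : (Algebra.linearMap R A) ∘ₗ h = (s : R) • g := by
      apply b.ext
      intro j
      simp [h, ha]
    exact fun v => LinearMap.congr_fun this v
  have : IsNoetherian R K := isNoetherian_of_injective i hi
  obtain ⟨n, w, hw⟩ := Module.Finite.exists_fin (R := R) (M := K)
  have h2 : ∀ k, ∃ t : S, (t : R) * (s * f k) = t * h (i k) := by
    intro k
    rw [← IsLocalization.eq_iff_exists S A, hh, hg, map_mul, Algebra.smul_def]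
  choose t ht using fun j => h2 (w j)
  refine ⟨(∏ j, (t j : R)) * s, ?_, (∏ j, (t j : R)) • h, ?_⟩
  · exact (S.mul_mem (S.prod_mem fun j _ => (t j).2) s.2)
  · have : (((∏ j, (t j : R)) * s) • f) = ((∏ j, (t j : R)) • h) ∘ₗ i := by
      apply LinearMap.ext_on hw
      rintro _ ⟨j, rfl⟩
      obtain ⟨c, hc⟩ := Finset.dvd_prod_of_mem (fun j => (t j : R)) (Finset.mem_univ j)
      simp only [LinearMap.smul_apply, smul_eq_mul, LinearMap.comp_apply]
      rw [hc]
      linear_combination c * ht j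
    exact fun k => LinearMap.congr_fun this k

lemma aux_reflexive {R : Type u} [CommRing R] [IsNoetherianRing R]
    (hS1 : ∀ p ∈ associatedPrimes R R, p ∈ minimalPrimes R)
    (hG0 : ∀ (p : Ideal R) [p.IsPrime], p ∈ minimalPrimes R →
      Module.Injective (Localization.AtPrime p) (Localization.AtPrime p))
    {F G : Type u} [AddCommGroup F] [Module R F] [AddCommGroup G] [Module R G]
    [Module.Finite R F] [Module.Free R F] [Module.Free R G] (g : F →ₗ[R] G) :
    Module.IsReflexive R (LinearMap.ker g) := by
  set K := LinearMap.ker g with hK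
  refine ⟨⟨?_, ?_⟩⟩
  · rw [injective_iff_map_eq_zero]
    intro k hk
    apply Subtype.ext
    apply (Module.forall_dual_apply_eq_zero_iff R (k : F)).mp
    intro φ
    exact LinearMap.congr_fun hk (φ ∘ₗ K.subtype)
  · intro ξ
    obtain ⟨v, hv⟩ := (Module.bijective_dual_eval R F).2 (ξ ∘ₗ K.subtype.dualMap)
    have hv' : ∀ φ : Module.Dual R F, φ v = ξ (φ ∘ₗ K.subtype) := fun φ => LinearMap.congr_fun hv φ
    have hvK : v ∈ K := by
      rw [hK, LinearMap.mem_ker]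
      apply (Module.forall_dual_apply_eq_zero_iff R (g v)).mp
      intro ψ
      have := hv' (ψ ∘ₗ g)
      have h0 : (ψ ∘ₗ g) ∘ₗ K.subtype = 0 := by
        ext k
        have : g k = 0 := k.2
        simp [this]
      rw [h0, map_zero] at this
      exact this
    refine ⟨⟨v, hvK⟩, ?_⟩
    ext f
    by_contra hne
    have hne' : f ⟨v, hvK⟩ - ξ f ≠ 0 := sub_ne_zero.mpr hne
    obtain ⟨p, hp, hle⟩ := exists_le_isAssociatedPrime_of_isNoetherianRing R _ hne'
    have hmin := hS1 p hp
    have hpp : p.IsPrime := hmin.1.1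
    obtain ⟨s, hs, h, hsh⟩ := aux_extend p (hG0 p hmin) K.subtype K.injective_subtype f
    apply hs
    apply hle
    rw [Submodule.mem_colon_singleton, Submodule.mem_bot]
    have e : s • f = h ∘ₗ K.subtype := LinearMap.ext hsh
    have h1 := hv' h
    rw [← e, map_smul] at h1
    have h2 : s * f ⟨v, hvK⟩ = h v := hsh ⟨v, hvK⟩
    rw [smul_eq_mul, mul_sub, h2, h1, smul_eq_mul, sub_self]

/-- an ideal of a nontrivial commutative ring that is free is zero or generated by a regular element -/
lemma aux_free_ideal {R : Type*} [CommRing R] [Nontrivial R] (I : Ideal R) [Module.Free R I] :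
    I = ⊥ ∨ ∃ y : R, I = Ideal.span {y} ∧ y ≠ 0 ∧ IsSMulRegular R y := by
  let b := Module.Free.chooseBasis R I
  rcases isEmpty_or_nonempty (Module.Free.ChooseBasisIndex R I) with he | ⟨⟨j⟩⟩
  · left
    have : Subsingleton I := b.repr.toEquiv.subsingleton
    exact (Submodule.subsingleton_iff_eq_bot).mp this
  · right
    have hreg : IsSMulRegular R (b j : R) := by
      rw [isSMulRegular_iff_right_eq_zero_of_smul]
      intro r hr
      have : r • b j = 0 := Subtype.ext (by simpa [mul_comm] using hr)
      have := congrArg (fun z => b.repr z j) this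
      simpa using this
    refine ⟨b j, ?_, ?_, hreg⟩
    · apply le_antisymm
      · have huniq : ∀ l, l = j := by
          intro l
          by_contra hne
          have : (b j : R) • b l = (b l : R) • b j := Subtype.ext (by simp [mul_comm])
          have := congrArg (fun z => b.repr z l) this
          simp [Ne.symm hne] at this
          exact b.ne_zero j this
        intro z hz
        have h1 := b.span_eq
        have h2 : (⟨z, hz⟩ : I) ∈ Submodule.span R (Set.range b) := h1 ▸ trivial
        have h3 : Set.range b = {b j} := by
          ext u; constructor
          · rintro ⟨l, rfl⟩; rw [huniq l]; rfl
          · rintro rfl; exact ⟨j, rfl⟩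
        rw [h3, Submodule.mem_span_singleton] at h2
        obtain ⟨a, ha⟩ := h2
        exact Ideal.mem_span_singleton'.mpr ⟨a, congrArg Subtype.val ha⟩
      · rw [Ideal.span_le, Set.singleton_subset_iff]; exact (b j).2
    · intro h
      exact b.ne_zero j (Subtype.ext h)

lemma aux_complement {R : Type*} [CommRing R] [IsNoetherianRing R] [IsLocalRing R] {x : R}
    (hx : x ∈ maximalIdeal R) (hx2 : x ∉ maximalIdeal R ^ 2) :
    ∃ N : Ideal R, N ≤ maximalIdeal R ∧ (∀ z ∈ maximalIdeal R, ∃ c, z - c * x ∈ N) ∧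
      ∀ a, a * x ∈ N → a ∈ maximalIdeal R := by
  set m := maximalIdeal R with hm
  have h0 : m.toCotangent ⟨x, hx⟩ ≠ 0 := by
    rw [Ne, Ideal.toCotangent_eq_zero]; exact hx2
  have : ∃ φ : Module.Dual (ResidueField R) (CotangentSpace R), φ (m.toCotangent ⟨x, hx⟩) ≠ 0 := by
    by_contra! h
    exact h0 ((Module.forall_dual_apply_eq_zero_iff (ResidueField R) (V := CotangentSpace R) _).mp h)
  obtain ⟨φ, hφ⟩ := this
  let ψ : m →ₗ[R] ResidueField R := (φ.restrictScalars R) ∘ₗ m.toCotangent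
  have hψ : ψ ⟨x, hx⟩ ≠ 0 := hφ
  refine ⟨(LinearMap.ker ψ).map m.subtype, Submodule.map_subtype_le _ _, ?_, ?_⟩
  · intro z hz
    obtain ⟨c, hc⟩ := IsLocalRing.residue_surjective (ψ ⟨z, hz⟩ * (ψ ⟨x, hx⟩)⁻¹)
    refine ⟨c, ⟨z, hz⟩ - c • ⟨x, hx⟩, ?_, rfl⟩
    have : c • ψ ⟨x, hx⟩ = residue R c * ψ ⟨x, hx⟩ := Algebra.smul_def _ _
    change ψ _ = 0
    rw [map_sub, map_smul, this, hc, inv_mul_cancel_right₀ hψ, sub_self]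
  · rintro a ⟨w, hw, hwa⟩
    have : w = a • ⟨x, hx⟩ := Subtype.ext hwa
    subst this
    have hw : ψ (a • ⟨x, hx⟩) = 0 := hw
    have h1 : a • ψ ⟨x, hx⟩ = residue R a * ψ ⟨x, hx⟩ := Algebra.smul_def _ _
    rw [map_smul, h1] at hw
    exact (residue_eq_zero_iff a).mp ((mul_eq_zero.mp hw).resolve_right hψ)

open Pointwise in
lemma aux_projective {R : Type u} [CommRing R] [IsNoetherianRing R] [IsLocalRing R]
    (hsyz : ∀ (n : ℕ) (g : (R × (Fin n → R)) →ₗ[R] R), Module.Free R (LinearMap.ker g))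
    {x : R} (hx : x ∈ maximalIdeal R) (hx2 : x ∉ maximalIdeal R ^ 2) (hreg : IsSMulRegular R x)
    [IsLocalRing (R ⧸ Ideal.span {x})] :
    Module.Free (R ⧸ Ideal.span {x}) (maximalIdeal (R ⧸ Ideal.span {x})) := by
  obtain ⟨N, hNm, hN1, hN2⟩ := aux_complement hx hx2
  obtain ⟨n, y, hy⟩ := Submodule.fg_iff_exists_fin_generating_family.mp (IsNoetherian.noetherian N)
  have hregc : ∀ a b : R, x * a = x * b → a = b := fun a b h => hreg h
  let A := R ⧸ Ideal.span {x}
  have hsurj : Function.Surjective (algebraMap R A) := Ideal.Quotient.mk_surjective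
  have hmx : ∀ r : R, Ideal.Quotient.mk (Ideal.span {x}) (x * r) = 0 := fun r =>
    Ideal.Quotient.eq_zero_iff_mem.mpr (Ideal.mul_mem_right _ _ (Ideal.mem_span_singleton_self x))
  have hmem : ∀ a : R, a ∈ maximalIdeal R →
      Ideal.Quotient.mk (Ideal.span {x}) a ∈ maximalIdeal A := by
    intro a ha
    rw [← IsLocalRing.map_maximalIdeal_of_surjective (Ideal.Quotient.mk (Ideal.span {x}))
      Ideal.Quotient.mk_surjective]
    exact Ideal.mem_map_of_mem _ ha
  let L : (Fin n → R) →ₗ[R] R := Fintype.linearCombination R y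
  have hLrange : LinearMap.range L = N := by
    rw [← hy]; exact Fintype.range_linearCombination R y
  have hLN : ∀ d, L d ∈ N := fun d => hLrange ▸ LinearMap.mem_range_self L d
  let g : (R × (Fin n → R)) →ₗ[R] R := LinearMap.coprod (LinearMap.toSpanSingleton R R x) L
  have hg : ∀ a v, g (a, v) = a * x + L v := fun a v => by simp [g]
  let K := LinearMap.ker g
  have hKfree : Module.Free R K := hsyz n g
  have hKm : ∀ k : K, k.1.1 ∈ maximalIdeal R := by
    rintro ⟨⟨a, v⟩, hk⟩
    apply hN2
    have hk : g (a, v) = 0 := hk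
    rw [hg] at hk
    rw [eq_neg_of_add_eq_zero_left hk]
    exact N.neg_mem (hLN v)
  let Q := QuotSMulTop x K
  let r0 : K →ₗ[R] maximalIdeal A :=
    { toFun := fun k => ⟨Ideal.Quotient.mk (Ideal.span {x}) k.1.1, hmem _ (hKm k)⟩
      map_add' := fun a b => Subtype.ext (by simp)
      map_smul' := fun a b => Subtype.ext (by simp; rfl) }
  let r : Q →ₗ[R] maximalIdeal A := Submodule.liftQ _ r0 (by
    intro k hk
    obtain ⟨k', -, rfl⟩ := (Submodule.mem_smul_pointwise_iff_exists _ _ _).mp hk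
    exact Subtype.ext (hmx _))
  let σ : (Fin n → R) →ₗ[R] maximalIdeal A :=
    { toFun := fun d => ⟨Ideal.Quotient.mk (Ideal.span {x}) (L d), hmem _ (hNm (hLN d))⟩
      map_add' := fun a b => Subtype.ext (by simp)
      map_smul' := fun a b => Subtype.ext (by simp; rfl) }
  have hσ : Function.Surjective σ := by
    rintro ⟨z, hz⟩
    rw [← IsLocalRing.map_maximalIdeal_of_surjective (Ideal.Quotient.mk (Ideal.span {x}))
      Ideal.Quotient.mk_surjective,
      Ideal.mem_map_iff_of_surjective _ Ideal.Quotient.mk_surjective] at hz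
    obtain ⟨w, hw, rfl⟩ := hz
    obtain ⟨c, hc⟩ := hN1 w hw
    rw [← hLrange] at hc
    obtain ⟨d, hd⟩ := hc
    refine ⟨d, Subtype.ext ?_⟩
    change Ideal.Quotient.mk (Ideal.span {x}) (L d) = _
    rw [hd, map_sub, mul_comm, hmx, sub_zero]
  let j0 : (Fin n → R) →ₗ[R] K :=
    LinearMap.codRestrict K (LinearMap.prod L (-(x • LinearMap.id))) (by
      intro d
      change g (L d, -(x • d)) = 0
      rw [hg, map_neg, map_smul, smul_eq_mul]; ring)
  let J : (Fin n → R) →ₗ[R] Q := (Submodule.mkQ _) ∘ₗ j0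
  have hJ : LinearMap.ker σ ≤ LinearMap.ker J := by
    intro d hd
    have hd : Ideal.Quotient.mk (Ideal.span {x}) (L d) = 0 :=
      congrArg Subtype.val (LinearMap.mem_ker.mp hd)
    rw [Ideal.Quotient.eq_zero_iff_mem, Ideal.mem_span_singleton'] at hd
    obtain ⟨e, he⟩ := hd
    change (Submodule.Quotient.mk (j0 d) : Q) = 0
    rw [Submodule.Quotient.mk_eq_zero, Submodule.mem_smul_pointwise_iff_exists]
    refine ⟨⟨(e, -d), ?_⟩, trivial, ?_⟩
    · change g (e, -d) = 0
      rw [hg, map_neg, he]; ring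
    · apply Subtype.ext
      change x • (e, -d) = (L d, -(x • d))
      rw [← he]
      ext
      · simp [mul_comm]
      · simp
  let i : maximalIdeal A →ₗ[R] Q :=
    (Submodule.liftQ _ J hJ) ∘ₗ (σ.quotKerEquivOfSurjective hσ).symm.toLinearMap
  have hi : ∀ d, i (σ d) = J d := by
    intro d
    have : (σ.quotKerEquivOfSurjective hσ).symm (σ d) = Submodule.Quotient.mk d := by
      rw [LinearEquiv.symm_apply_eq]; rfl
    simp only [i, LinearMap.comp_apply, LinearEquiv.coe_coe, this, Submodule.liftQ_apply]
  have hri : r ∘ₗ i = LinearMap.id := by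
    ext z
    obtain ⟨d, rfl⟩ := hσ z
    rw [LinearMap.comp_apply, hi]
    rfl
  have hQ : Module.Free A Q := inferInstance
  have hproj : Module.Projective A (maximalIdeal A) :=
    Module.Projective.of_split (i.extendScalarsOfSurjective hsurj)
      (r.extendScalarsOfSurjective hsurj) (by
        ext z
        exact congrArg Subtype.val (LinearMap.congr_fun hri z))
  exact Module.free_of_flat_of_isLocalRing

lemma aux_dim_step {R : Type*} [CommRing R] [IsNoetherianRing R] [IsLocalRing R] {x : R}
    (hx : maximalIdeal R = Ideal.span {x}) (hreg : IsSMulRegular R x) : ringKrullDim R = 1 := by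
  rw [← ringKrullDim_quotient_span_singleton_succ_eq_ringKrullDim hreg
    (hx ▸ Ideal.mem_span_singleton_self x), ← hx, ringKrullDim_eq_zero_of_isField]
  · rfl
  · exact (Ideal.Quotient.maximal_ideal_iff_isField_quotient _).mp inferInstance

lemma aux_forward {R : Type u} [CommRing R] [IsNoetherianRing R] [IsLocalRing R]
    (hS1 : ∀ p ∈ associatedPrimes R R, p ∈ minimalPrimes R)
    (hG0 : ∀ (p : Ideal R) [p.IsPrime], p ∈ minimalPrimes R →
      Module.Injective (Localization.AtPrime p) (Localization.AtPrime p))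
    (H : ∀ (M : Type u) [AddCommGroup M] [Module R M], Module.Finite R M →
      Module.IsReflexive R M → Module.Free R M) :
    (∃ s : Finset R, Ideal.span (s : Set R) = IsLocalRing.maximalIdeal R ∧
      (s.card : WithBot ℕ∞) = ringKrullDim R) ∧ ringKrullDim R ≤ 2 := by
  classical
  by_cases hm0 : maximalIdeal R = ⊥
  · have hd : ringKrullDim R = 0 :=
      ringKrullDim_eq_zero_of_isField (isField_iff_maximalIdeal_eq.mpr hm0)
    rw [hd]
    exact ⟨⟨∅, by simp [hm0], by simp⟩, by decide⟩
  -- the socle vanishes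
  have hsoc : ∀ z : R, (∀ a ∈ maximalIdeal R, a * z = 0) → z = 0 := by
    obtain ⟨n, y, hy⟩ := Submodule.fg_iff_exists_fin_generating_family.mp
      (IsNoetherian.noetherian (maximalIdeal R))
    let g : R →ₗ[R] (Fin n → R) := LinearMap.pi fun j => LinearMap.mulLeft R (y j)
    have hfree : Module.Free R (LinearMap.ker g) := H _ inferInstance (aux_reflexive hS1 hG0 g)
    intro z hz
    have hzK : z ∈ LinearMap.ker g := by
      rw [LinearMap.mem_ker]
      ext j
      exact hz _ (hy ▸ Submodule.subset_span ⟨j, rfl⟩)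
    by_contra hz0
    apply hm0
    rw [eq_bot_iff]
    intro a ha
    have hnt : Nontrivial (LinearMap.ker g) := ⟨⟨⟨z, hzK⟩, 0, fun h => hz0 (congrArg Subtype.val h)⟩⟩
    let b := Module.Free.chooseBasis R (LinearMap.ker g)
    obtain ⟨j⟩ := b.index_nonempty
    have h1 : a • b j = 0 := by
      apply Subtype.ext
      have hw : ∀ c ∈ maximalIdeal R, c * (b j : R) = 0 := by
        intro c hc
        rw [← hy] at hc
        induction hc using Submodule.span_induction with
        | mem c hc =>
          obtain ⟨l, rfl⟩ := hc
          exact congrFun (LinearMap.mem_ker.mp (b j).2) l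
        | zero => simp
        | add c d _ _ h1 h2 => rw [add_mul, h1, h2, add_zero]
        | smul t c _ h => rw [smul_mul_assoc, h, smul_zero]
      exact hw a ha
    have := congrArg (fun z => b.repr z j) h1
    simpa using this
  have hfinass : (associatedPrimes R R).Finite := associatedPrimes.finite R R
  have hnotass : ∀ p ∈ associatedPrimes R R, ¬ maximalIdeal R ≤ p := by
    intro p hp hle
    have hp' := hp
    rw [AssociatedPrimes.mem_iff, isAssociatedPrime_iff] at hp'
    obtain ⟨hpp, z, hz⟩ := hp'
    have : z = 0 := hsoc z fun a ha => by
      have := hle ha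
      rw [hz, Submodule.mem_colon_singleton] at this
      simpa using this
    subst this
    apply hpp.ne_top
    rw [hz]; simp
  have hsq : ¬ maximalIdeal R ≤ maximalIdeal R ^ 2 := by
    intro h
    apply hm0
    apply Submodule.eq_bot_of_le_smul_of_le_jacobson_bot (maximalIdeal R) (maximalIdeal R)
      (IsNoetherian.noetherian _)
    · rw [smul_eq_mul, ← pow_two]; exact h
    · exact IsLocalRing.maximalIdeal_le_jacobson _
  obtain ⟨x, hxm, hx2, hreg⟩ : ∃ x ∈ maximalIdeal R, x ∉ maximalIdeal R ^ 2 ∧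
      IsSMulRegular R x := by
    by_contra! hcon
    have hsub : ((maximalIdeal R : Ideal R) : Set R) ⊆
        ⋃ i ∈ ((insert (maximalIdeal R ^ 2) hfinass.toFinset : Finset (Ideal R)) :
          Set (Ideal R)), (i : Set R) := by
      intro z hz
      by_cases h2 : z ∈ maximalIdeal R ^ 2
      · exact Set.mem_biUnion (x := maximalIdeal R ^ 2) (by simp) h2
      · have h3 : z ∈ ⋃ p ∈ associatedPrimes R R, (p : Set R) := by
          rw [biUnion_associatedPrimes_eq_compl_regular]
          exact hcon z hz h2
        rw [Set.mem_iUnion₂] at h3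
        obtain ⟨p, hp, hzp⟩ := h3
        exact Set.mem_biUnion (x := p) (by simp [hp]) hzp
    rw [Ideal.subset_union_prime (f := fun i : Ideal R => i) (maximalIdeal R ^ 2)
      (maximalIdeal R ^ 2)] at hsub
    · obtain ⟨p, hp, hle⟩ := hsub
      rw [Finset.mem_insert] at hp
      rcases hp with rfl | hp
      · exact hsq hle
      · exact hnotass p (by simpa using hp) hle
    · intro p hp hne _
      rw [Finset.mem_insert] at hp
      have hp : p ∈ associatedPrimes R R := by simpa using hp.resolve_left hne
      exact (hS1 p hp).1.1
  have hloc : IsLocalRing (R ⧸ Ideal.span {x}) := aux_quot_local hxm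
  have hfree := aux_projective (fun n g => H _ inferInstance (aux_reflexive hS1 hG0 g)) hxm hx2 hreg
  have hdim := ringKrullDim_quotient_span_singleton_succ_eq_ringKrullDim hreg hxm
  have hmm := IsLocalRing.map_maximalIdeal_of_surjective (Ideal.Quotient.mk (Ideal.span {x}))
    Ideal.Quotient.mk_surjective
  have hker : RingHom.ker (Ideal.Quotient.mk (Ideal.span {x})) ≤ maximalIdeal R := by
    rw [Ideal.mk_ker]; simpa [Ideal.span_le] using hxm
  have hcomap : maximalIdeal R = Ideal.comap (Ideal.Quotient.mk (Ideal.span {x}))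
      (maximalIdeal (R ⧸ Ideal.span {x})) := by
    rw [← hmm, Ideal.comap_map_of_surjective' _ Ideal.Quotient.mk_surjective, sup_eq_left.mpr hker]
  rcases aux_free_ideal (maximalIdeal (R ⧸ Ideal.span {x})) with h | ⟨y, hy, hy0, hyreg⟩
  · have hx : maximalIdeal R = Ideal.span {x} := by
      rw [hcomap, h, ← RingHom.ker_eq_comap_bot, Ideal.mk_ker]
    have hd := aux_dim_step hx hreg
    rw [hd]
    exact ⟨⟨{x}, by simp [hx], by simp⟩, by decide⟩
  · obtain ⟨y, rfl⟩ := Ideal.Quotient.mk_surjective y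
    have hx : maximalIdeal R = Ideal.span {x, y} := by
      rw [hcomap, hy, ← Set.image_singleton, ← Ideal.map_span,
        Ideal.comap_map_of_surjective' _ Ideal.Quotient.mk_surjective, Ideal.mk_ker,
        ← Ideal.span_union, Set.union_comm]
      rfl
    have hxy : x ≠ y := by
      rintro rfl
      exact hy0 (Ideal.Quotient.eq_zero_iff_mem.mpr (Ideal.mem_span_singleton_self x))
    have hd : ringKrullDim R = 2 := by
      rw [← hdim, aux_dim_step hy hyreg]; rfl
    rw [hd]
    refine ⟨⟨{x, y}, by simp [hx], ?_⟩, le_rfl⟩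
    rw [Finset.card_pair hxy]; rfl

end Aux

/-- Let `(R,𝔪)` be a noetherian local ring which is quasi-reduced:
every associated prime of `R` is a minimal prime (Serre's condition `S₁`) and for every
minimal prime `𝔭` the localization `R_𝔭` is injective as a module over itself
(`R` is generically Gorenstein). Then every finitely generated reflexive `R`-module is
free if and only if `R` is a regular local ring (the maximal ideal is generated by as
many elements as the Krull dimension) of Krull dimension at most two. -/
theorem stmt15 (R : Type u) [CommRing R] [IsNoetherianRing R] [IsLocalRing R]
    (hS1 : ∀ p ∈ associatedPrimes R R, p ∈ minimalPrimes R)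
    (hG0 : ∀ (p : Ideal R) [p.IsPrime], p ∈ minimalPrimes R →
      Module.Injective (Localization.AtPrime p) (Localization.AtPrime p)) :
    (∀ (M : Type u) [AddCommGroup M] [Module R M], Module.Finite R M →
      Module.IsReflexive R M → Module.Free R M) ↔
    ((∃ s : Finset R, Ideal.span (s : Set R) = IsLocalRing.maximalIdeal R ∧
      (s.card : WithBot ℕ∞) = ringKrullDim R) ∧ ringKrullDim R ≤ 2) := by
  constructor
  · intro H
    exact aux_forward hS1 hG0 H
  · rintro ⟨⟨s, hs, hc⟩, h2⟩ M _ _ hM hr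
    exact aux_backward s hs hc h2 M
end

section
/- Let (R,𝔪) be a noetherian local ring with 𝔪² = 0 and 𝔪 not generated by a single element, and let M be a finitely generated nonzero R-module which is not free. Then M is not reflexive; moreover the dual M* is nonzero, finitely generated, not free, and not reflexive (so that by iteration no iterated dual M^{ℓ*} is reflexive). -/
open IsLocalRing in
/-- A module killed by `𝔪` has a functional to the residue field with value `1` at `x ≠ 0`. -/
theorem aux_functional {R : Type*} [CommRing R] [IsLocalRing R] {N : Type*} [AddCommGroup N]
    [Module R N] (hN : ∀ a ∈ maximalIdeal R, ∀ x : N, a • x = 0) (x : N) (hx : x ≠ 0) :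
    ∃ φ : N →ₗ[R] (R ⧸ maximalIdeal R), φ x = 1 := by
  have ht : Module.IsTorsionBySet R N (maximalIdeal R) := fun y a => hN a a.2 y
  let _ : Module (R ⧸ maximalIdeal R) N := ht.module
  let _ : Field (R ⧸ maximalIdeal R) := Ideal.Quotient.field _
  have : IsScalarTower R (R ⧸ maximalIdeal R) N := ht.isScalarTower
  obtain ⟨f, hf⟩ := Module.Projective.exists_dual_ne_zero (R ⧸ maximalIdeal R) hx
  refine ⟨((f x)⁻¹ • f).restrictScalars R, ?_⟩
  simp [hf]

open IsLocalRing in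
/-- The map `k → N` sending `1` to an element killed by `𝔪`. -/
theorem aux_map {R : Type*} [CommRing R] [IsLocalRing R] {N : Type*} [AddCommGroup N]
    [Module R N] (x : N) (hx : ∀ a ∈ maximalIdeal R, a • x = 0) :
    ∃ f : (R ⧸ maximalIdeal R) →ₗ[R] N, f 1 = x := by
  refine ⟨Submodule.liftQ _ (LinearMap.toSpanSingleton R N x) ?_, ?_⟩
  · intro a ha
    simpa using hx a ha
  · have : (1 : R ⧸ maximalIdeal R) = Submodule.Quotient.mk 1 := rfl
    rw [this, Submodule.liftQ_apply]
    simp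

open IsLocalRing in
theorem aux_mul {R : Type*} [CommRing R] [IsLocalRing R]
    (hm : maximalIdeal R ^ 2 = ⊥) {a b : R} (ha : a ∈ maximalIdeal R)
    (hb : b ∈ maximalIdeal R) : a * b = 0 := by
  have : a * b ∈ maximalIdeal R ^ 2 := by
    rw [pow_two]; exact Ideal.mul_mem_mul ha hb
  rw [hm] at this
  simpa using this

open IsLocalRing in
theorem aux_exists {R : Type*} [CommRing R] [IsLocalRing R]
    (hmp : ¬ (maximalIdeal R).IsPrincipal) : ∃ x ∈ maximalIdeal R, x ≠ 0 := by
  by_contra! h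
  apply hmp
  have : maximalIdeal R = ⊥ := (Submodule.eq_bot_iff _).2 h
  rw [this]
  infer_instance

open IsLocalRing in
/-- The residue field is not reflexive. -/
theorem aux_residue {R : Type*} [CommRing R] [IsLocalRing R]
    (hm : maximalIdeal R ^ 2 = ⊥) (hmp : ¬ (maximalIdeal R).IsPrincipal) :
    ¬ Module.IsReflexive R (R ⧸ maximalIdeal R) := by
  intro hr
  obtain ⟨x, hxm, hx0⟩ := aux_exists hmp
  have hmem : ∀ f : Module.Dual R (R ⧸ maximalIdeal R), f 1 ∈ maximalIdeal R := by
    intro f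
    rw [mem_maximalIdeal, mem_nonunits_iff]
    intro hu
    apply hx0
    have h1 : x • (1 : R ⧸ maximalIdeal R) = 0 := by
      rw [Algebra.smul_def, mul_one]
      exact Ideal.Quotient.eq_zero_iff_mem.2 hxm
    have h2 : x * f 1 = 0 := by
      rw [← smul_eq_mul, ← map_smul, h1, map_zero]
    exact (hu.mul_left_eq_zero).1 h2
  have hgen : ∀ y ∈ maximalIdeal R, ∃ f : Module.Dual R (R ⧸ maximalIdeal R), f 1 = y :=
    fun y hy => aux_map y (fun a ha => aux_mul hm ha hy)
  obtain ⟨φ, hφ⟩ := aux_functional (N := maximalIdeal R)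
    (fun a ha y => Subtype.ext (aux_mul hm ha y.2)) ⟨x, hxm⟩
    (fun h => hx0 (congrArg Subtype.val h))
  obtain ⟨g, hg⟩ := hgen x hxm
  let e : Module.Dual R (R ⧸ maximalIdeal R) →ₗ[R] maximalIdeal R :=
    LinearMap.codRestrict _ (Module.Dual.eval R _ 1) hmem
  obtain ⟨c, hc⟩ := (Module.bijective_dual_eval R (R ⧸ maximalIdeal R)).2 (g ∘ₗ φ ∘ₗ e)
  obtain ⟨r, rfl⟩ := Ideal.Quotient.mk_surjective c
  have key : ∀ y (hy : y ∈ maximalIdeal R), g (φ ⟨y, hy⟩) = r * y := by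
    intro y hy
    obtain ⟨f, hf⟩ := hgen y hy
    have h := LinearMap.congr_fun hc f
    have he : e f = ⟨y, hy⟩ := Subtype.ext hf
    have h1 : (Ideal.Quotient.mk (maximalIdeal R) r) = r • (1 : R ⧸ maximalIdeal R) := by
      rw [Algebra.smul_def, mul_one]; rfl
    rw [Module.Dual.eval_apply, h1, map_smul, hf] at h
    simp only [LinearMap.comp_apply, he] at h
    exact h.symm
  have hr : r ∉ maximalIdeal R := by
    intro h
    have := key x hxm
    rw [hφ, hg, aux_mul hm h hxm] at this
    exact hx0 this
  have hu : IsUnit r := by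
    rwa [mem_maximalIdeal, mem_nonunits_iff, not_not] at hr
  obtain ⟨u, rfl⟩ := hu
  apply hmp
  refine ⟨x, le_antisymm ?_ ?_⟩
  · intro y hy
    obtain ⟨s, hs⟩ := Ideal.Quotient.mk_surjective (φ ⟨y, hy⟩)
    have h1 : φ ⟨y, hy⟩ = s • (1 : R ⧸ maximalIdeal R) := by
      rw [← hs, Algebra.smul_def, mul_one]; rfl
    have h2 := key y hy
    rw [h1, map_smul, hg] at h2
    refine Submodule.mem_span_singleton.2 ⟨↑u⁻¹ * s, ?_⟩
    rw [smul_eq_mul] at h2 ⊢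
    rw [mul_assoc, h2, Units.inv_mul_cancel_left]
  · exact (Submodule.span_singleton_le_iff_mem _ _).2 hxm

/-- Splitting off a maximal free summand. -/
theorem aux_split {R : Type*} [CommRing R] [Nontrivial R] [IsNoetherianRing R]
    {M : Type*} [AddCommGroup M] [Module R M] [Module.Finite R M] (hnf : ¬ Module.Free R M) :
    ∃ (N : Submodule R M) (p : M →ₗ[R] N), p ∘ₗ N.subtype = .id ∧ Nontrivial N ∧
      ∀ h : N →ₗ[R] R, ¬ Function.Surjective h := by
  classical
  obtain ⟨k, q, hq⟩ := Module.Finite.exists_fin' R M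
  let P : ℕ → Prop := fun n => ∃ g : M →ₗ[R] (Fin n → R), Function.Surjective g
  have hb : ∀ n, P n → n ≤ k := fun n ⟨g, hg⟩ =>
    le_of_fin_surjective R (g ∘ₗ q) (hg.comp hq)
  have h0 : P 0 := ⟨0, fun y => ⟨0, Subsingleton.elim _ _⟩⟩
  have hPn : P (Nat.findGreatest P k) := Nat.findGreatest_spec (Nat.zero_le k) h0
  have hmax : ¬ P (Nat.findGreatest P k + 1) := fun h => by
    have := Nat.le_findGreatest (hb _ h) h
    omega
  generalize Nat.findGreatest P k = n at hPn hmax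
  obtain ⟨g, hg⟩ := hPn
  obtain ⟨s, hs⟩ := g.exists_rightInverse_of_surjective (LinearMap.range_eq_top.2 hg)
  have hs' : ∀ v, g (s v) = v := fun v => LinearMap.congr_fun hs v
  let p : M →ₗ[R] LinearMap.ker g :=
    LinearMap.codRestrict _ (LinearMap.id - s ∘ₗ g) (fun x => by simp [hs'])
  have hp : ∀ y : LinearMap.ker g, p y = y := fun y => Subtype.ext (by
    have : g y = 0 := y.2
    simp [p, this])
  refine ⟨LinearMap.ker g, p, LinearMap.ext hp, ?_, ?_⟩
  · by_contra hN
    rw [not_nontrivial_iff_subsingleton] at hN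
    have hk : LinearMap.ker g = ⊥ := Submodule.subsingleton_iff_eq_bot.1 hN
    exact hnf (Module.Free.of_equiv
      (LinearEquiv.ofBijective g ⟨LinearMap.ker_eq_bot.1 hk, hg⟩).symm)
  · intro h hh
    apply hmax
    refine ⟨LinearMap.vecCons (h ∘ₗ p) g, fun w => ?_⟩
    obtain ⟨y, hy⟩ := hh (w 0)
    have hgy : g y = 0 := y.2
    have hps : p (s (Fin.tail w)) = 0 := Subtype.ext (by simp [p, hs'])
    refine ⟨s (Fin.tail w) + y, ?_⟩
    rw [LinearMap.vecCons_apply, LinearMap.comp_apply, map_add, map_add, map_add, hps, hp, hgy, hs',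
      map_zero, zero_add, add_zero, hy]
    exact Fin.cons_self_tail w

open IsLocalRing in
/-- If no functional is surjective, the dual is killed by `𝔪`. -/
theorem aux_dual {R : Type*} [CommRing R] [IsLocalRing R]
    (hm : maximalIdeal R ^ 2 = ⊥) {N : Type*} [AddCommGroup N] [Module R N]
    (hN : ∀ h : N →ₗ[R] R, ¬ Function.Surjective h) :
    ∀ a ∈ maximalIdeal R, ∀ f : Module.Dual R N, a • f = 0 := by
  intro a ha f
  ext x
  refine aux_mul hm ha ?_
  rw [mem_maximalIdeal, mem_nonunits_iff]
  rintro ⟨u, hu⟩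
  refine hN f (fun r => ⟨(r * ↑u⁻¹) • x, ?_⟩)
  rw [map_smul, ← hu, smul_eq_mul, Units.inv_mul_cancel_right]

open IsLocalRing in
theorem aux_nosurj {R : Type*} [CommRing R] [IsLocalRing R]
    (hmp : ¬ (maximalIdeal R).IsPrincipal) {N : Type*} [AddCommGroup N] [Module R N]
    (hN : ∀ a ∈ maximalIdeal R, ∀ x : N, a • x = 0) (h : N →ₗ[R] R) :
    ¬ Function.Surjective h := by
  intro hs
  obtain ⟨x, hxm, hx0⟩ := aux_exists hmp
  obtain ⟨y, hy⟩ := hs 1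
  apply hx0
  rw [← mul_one x, ← smul_eq_mul, ← hy, ← map_smul, hN x hxm, map_zero]

open IsLocalRing in
/-- The dual of a nonzero finitely generated module is nonzero. -/
theorem aux_dual_nontrivial {R : Type*} [CommRing R] [IsLocalRing R]
    (hm : maximalIdeal R ^ 2 = ⊥)
    (hmp : ¬ (maximalIdeal R).IsPrincipal) (N : Type*) [AddCommGroup N] [Module R N]
    [Module.Finite R N] [Nontrivial N] : Nontrivial (Module.Dual R N) := by
  obtain ⟨x, hxm, hx0⟩ := aux_exists hmp
  have hne : maximalIdeal R • (⊤ : Submodule R N) ≠ ⊤ := by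
    intro h
    have := Submodule.eq_bot_of_le_smul_of_le_jacobson_bot (maximalIdeal R)
      (⊤ : Submodule R N) Module.Finite.fg_top h.ge (maximalIdeal_le_jacobson _)
    exact top_ne_bot this
  obtain ⟨y, hy⟩ : ∃ y : N, y ∉ maximalIdeal R • (⊤ : Submodule R N) := by
    by_contra! h
    exact hne ((Submodule.eq_top_iff').2 h)
  obtain ⟨φ, hφ⟩ := aux_functional
    (N := N ⧸ (maximalIdeal R • (⊤ : Submodule R N)))
    (fun a ha z => by
      obtain ⟨z, rfl⟩ := Submodule.mkQ_surjective _ z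
      rw [← map_smul]
      exact (Submodule.Quotient.mk_eq_zero _).2 (Submodule.smul_mem_smul ha trivial))
    (Submodule.mkQ _ y) (fun h => hy ((Submodule.Quotient.mk_eq_zero _).1 h))
  obtain ⟨g, hg⟩ := aux_map x (fun a ha => aux_mul hm ha hxm)
  refine ⟨g ∘ₗ φ ∘ₗ Submodule.mkQ _, 0, fun h => hx0 ?_⟩
  have := LinearMap.congr_fun h y
  rwa [LinearMap.comp_apply, LinearMap.comp_apply, hφ, hg] at this

open IsLocalRing in
theorem aux_not_reflexive {R : Type*} [CommRing R] [IsNoetherianRing R] [IsLocalRing R]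
    (hm : maximalIdeal R ^ 2 = ⊥) (hmp : ¬ (maximalIdeal R).IsPrincipal)
    {M : Type*} [AddCommGroup M] [Module R M] [Module.Finite R M]
    (hnf : ¬ Module.Free R M) : ¬ Module.IsReflexive R M := by
  intro hr
  obtain ⟨N, p, hp, hnt, hN⟩ := aux_split hnf
  have hrN : Module.IsReflexive R N := .of_split N.subtype p hp
  have h2 := aux_dual hm (aux_nosurj (N := Module.Dual R N) hmp (aux_dual hm hN))
  have hk : ∀ a ∈ maximalIdeal R, ∀ x : N, a • x = 0 := by
    intro a ha x
    apply (Module.bijective_dual_eval R N).1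
    rw [map_smul, map_zero]
    exact h2 a ha _
  obtain ⟨x, hx⟩ := exists_ne (0 : N)
  obtain ⟨φ, hφ⟩ := aux_functional hk x hx
  obtain ⟨g, hg⟩ := aux_map x (fun a ha => hk a ha x)
  apply aux_residue hm hmp
  refine .of_split g φ (LinearMap.ext fun c => ?_)
  obtain ⟨r, rfl⟩ := Ideal.Quotient.mk_surjective c
  have h1 : (Ideal.Quotient.mk (maximalIdeal R) r) = r • (1 : R ⧸ maximalIdeal R) := by
    rw [Algebra.smul_def, mul_one]; rfl
  rw [LinearMap.comp_apply, h1, map_smul, map_smul, hg, hφ]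
  rfl

open IsLocalRing in
theorem aux_dual_not_free {R : Type*} [CommRing R] [IsNoetherianRing R] [IsLocalRing R]
    (hm : maximalIdeal R ^ 2 = ⊥) (hmp : ¬ (maximalIdeal R).IsPrincipal)
    {M : Type*} [AddCommGroup M] [Module R M] [Module.Finite R M]
    (hnf : ¬ Module.Free R M) : ¬ Module.Free R (Module.Dual R M) := by
  intro hF
  obtain ⟨N, p, hp, hnt, hN⟩ := aux_split hnf
  have hk := aux_dual hm hN
  have := aux_dual_nontrivial hm hmp N
  have hproj : Module.Projective R (Module.Dual R N) :=
    .of_split p.dualMap N.subtype.dualMap (by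
      rw [LinearMap.dualMap_comp_dualMap, hp]; rfl)
  obtain ⟨f, hf⟩ := exists_ne (0 : Module.Dual R N)
  have : Module.Free R (Module.Dual R N) := Module.free_of_flat_of_isLocalRing
  obtain ⟨x, hxm, hx0⟩ := aux_exists hmp
  let b := Module.Free.chooseBasis R (Module.Dual R N)
  have hne : Nonempty (Module.Free.ChooseBasisIndex R (Module.Dual R N)) := b.index_nonempty
  have h := congrArg (fun v => b.repr v hne.some) (hk x hxm (b hne.some))
  simp at h
  exact hx0 h

/-- Let `(R,𝔪)` be a noetherian local ring with `𝔪² = 0` and `𝔪` not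
generated by a single element, and let `M` be a finitely generated nonzero `R`-module
which is not free. Then `M` is not reflexive; moreover the dual `M*` is nonzero, finitely
generated, not free, and not reflexive (so, by iteration, no iterated dual `M^{ℓ*}` is
reflexive). -/
theorem stmt16 (R : Type u) [CommRing R] [IsNoetherianRing R] [IsLocalRing R]
    (hm : IsLocalRing.maximalIdeal R ^ 2 = ⊥)
    (hmp : ¬ (IsLocalRing.maximalIdeal R).IsPrincipal)
    (M : Type u) [AddCommGroup M] [Module R M] [Module.Finite R M]
    (hM : Nontrivial M) (hnf : ¬ Module.Free R M) :
    ¬ Module.IsReflexive R M ∧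
      Nontrivial (Module.Dual R M) ∧
      Module.Finite R (Module.Dual R M) ∧
      ¬ Module.Free R (Module.Dual R M) ∧
      ¬ Module.IsReflexive R (Module.Dual R M) := by
  have hfin : Module.Finite R (Module.Dual R M) := inferInstance
  have hnf' := aux_dual_not_free hm hmp hnf
  exact ⟨aux_not_reflexive hm hmp hnf, aux_dual_nontrivial hm hmp M, hfin, hnf',
    aux_not_reflexive hm hmp hnf'⟩
end

section
/- Let (R,𝔪) be a noetherian local ring and let M be a finitely generated weakly reflexive R-module. Then the dual M* is reflexive (and hence every iterated dual M^{ℓ*} with ℓ ≥ 1 is reflexive). -/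
/-- Let `(R,𝔪)` be a noetherian local ring and let `M` be a finitely
generated weakly reflexive `R`-module (the evaluation map `M → M**` is surjective). Then
the dual `M*` is reflexive (and hence, by iteration, every iterated dual `M^{ℓ*}` with
`ℓ ≥ 1` is reflexive). -/
theorem stmt17 (R : Type u) [CommRing R] [IsNoetherianRing R] [IsLocalRing R]
    (M : Type u) [AddCommGroup M] [Module R M] [Module.Finite R M]
    (h : Function.Surjective (Module.Dual.eval R M)) :
    Module.IsReflexive R (Module.Dual R M) := by
  refine ⟨⟨fun f g hfg => ?_, fun φ => ⟨φ.comp (Module.Dual.eval R M), ?_⟩⟩⟩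
  · ext m
    exact LinearMap.congr_fun hfg (Module.Dual.eval R M m)
  · refine LinearMap.ext fun x => ?_
    obtain ⟨m, rfl⟩ := h x
    rfl
end

section
/- Let (R,𝔪) be a noetherian local ring and let M be a finitely generated R-module which is locally free on the punctured spectrum, i.e., for every prime ideal 𝔭 ≠ 𝔪 the localization M_𝔭 is a free R_𝔭-module. Assume there exists an M-regular sequence of length two consisting of elements of 𝔪, and there exists a Hom_R(M,M)-regular sequence of length three consisting of elements of 𝔪 (where Hom_R(M,M) is regarded as an R-module). Then Ext¹_R(M,M) = 0. -/
open CategoryTheory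

namespace Aux18
open Abelian Pointwise

lemma smul_lt {R : Type u} [CommRing R] [IsLocalRing R] (N : Type u) [AddCommGroup N] [Module R N]
    [Module.Finite R N] [Nontrivial N] :
    (IsLocalRing.maximalIdeal R) • (⊤ : Submodule R N) < ⊤ :=
  lt_top_iff_ne_top.mpr (Submodule.top_ne_ideal_smul_of_le_jacobson_annihilator
    (IsLocalRing.maximalIdeal_le_jacobson _)).symm

/-- Easy half of the Rees theorem for the residue field. -/
lemma ext_vanish {R : Type u} [CommRing R] [IsNoetherianRing R] [IsLocalRing R]
    (N : Type u) [AddCommGroup N] [Module R N] [Module.Finite R N]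
    (rs : List R) (mem : ∀ r ∈ rs, r ∈ IsLocalRing.maximalIdeal R)
    (reg : RingTheory.Sequence.IsRegular N rs) (i : ℕ) (hi : i < rs.length) :
    Subsingleton (Ext (ModuleCat.of R (R ⧸ IsLocalRing.maximalIdeal R)) (ModuleCat.of R N) i) := by
  have := reg.nontrivial
  refine ModuleCat.subsingleton_ext_of_exists_isRegular (IsLocalRing.maximalIdeal R) _ ?_ _
    (smul_lt N) rs mem reg i hi
  rw [Module.support_eq_zeroLocus]
  exact (congrArg _ (congrArg _ (Ideal.annihilator_quotient))).subset

lemma ext_pi {R : Type u} [CommRing R] (K : ModuleCat.{u} R)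
    (M : Type u) [AddCommGroup M] [Module R M] (n i : ℕ)
    (h : Subsingleton (Ext K (ModuleCat.of R M) i)) :
    Subsingleton (Ext K (ModuleCat.of R ((Fin n → R) →ₗ[R] M)) i) := by
  refine subsingleton_of_forall_eq 0 fun α => ?_
  let p : Fin n → (ModuleCat.of R ((Fin n → R) →ₗ[R] M) ⟶ ModuleCat.of R M) := fun j =>
    ModuleCat.ofHom (LinearMap.applyₗ (Pi.single j (1 : R)))
  let q : Fin n → (ModuleCat.of R M ⟶ ModuleCat.of R ((Fin n → R) →ₗ[R] M)) := fun j =>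
    ModuleCat.ofHom (LinearMap.smulRightₗ (LinearMap.proj (R := R) (φ := fun _ : Fin n => R) j))
  have hid : ∑ j, p j ≫ q j = 𝟙 _ := by
    ext f : 2
    refine LinearMap.pi_ext' fun k => ?_
    ext
    simp [p, q, ModuleCat.hom_sum, LinearMap.sum_apply, Pi.single_apply]
  have hm : ∑ j, (Ext.mk₀ (p j)).comp (Ext.mk₀ (q j)) (zero_add 0) =
      Ext.mk₀ (𝟙 (ModuleCat.of R ((Fin n → R) →ₗ[R] M))) := by
    rw [← hid]
    simp only [Ext.mk₀_comp_mk₀]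
    exact (map_sum Ext.addEquiv₀.symm _ _).symm
  rw [← Ext.comp_mk₀_id α, ← hm, Ext.comp_sum]
  refine Finset.sum_eq_zero fun j _ => ?_
  rw [← Ext.comp_assoc_of_second_deg_zero, Subsingleton.elim (α.comp _ _) 0, Ext.zero_comp]

/-- locally split -/
lemma exists_section {R : Type u} [CommRing R] [IsNoetherianRing R]
    (M : Type u) [AddCommGroup M] [Module R M] [Module.Finite R M]
    (F : Type u) [AddCommGroup F] [Module R F] [Module.Finite R F]
    (π : F →ₗ[R] M) (hπ : Function.Surjective π)
    (p : Ideal R) [p.IsPrime]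
    (hp : Module.Free (Localization.AtPrime p) (LocalizedModule p.primeCompl M)) :
    ∃ s ∉ p, ∃ g : M →ₗ[R] F, π ∘ₗ g = s • LinearMap.id := by
  have : Module.FinitePresentation R M := Module.finitePresentation_of_finite R M
  let S := p.primeCompl
  let πp := LocalizedModule.map S π
  have hs : Function.Surjective πp := LocalizedModule.map_surjective S π hπ
  obtain ⟨h, hh⟩ := Module.projective_lifting_property πp LinearMap.id hs
  obtain ⟨g, s, hg⟩ := Module.FinitePresentation.exists_lift_of_isLocalizedModule S
    (LocalizedModule.mkLinearMap S F) ((h.restrictScalars R) ∘ₗ LocalizedModule.mkLinearMap S M)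
  have key : (LocalizedModule.mkLinearMap S M) ∘ₗ (π ∘ₗ g) =
      (LocalizedModule.mkLinearMap S M) ∘ₗ ((s : R) • LinearMap.id) := by
    ext m
    have h1 := LinearMap.congr_fun hg m
    have h2 := congrArg πp h1
    have h3 := LinearMap.congr_fun hh (LocalizedModule.mkLinearMap S M m)
    have h4 : πp (s • h (LocalizedModule.mkLinearMap S M m)) =
      s • πp (h (LocalizedModule.mkLinearMap S M m)) := (πp.restrictScalars R).map_smul (s : R) _
    simp only [LinearMap.comp_apply, LinearMap.smul_apply, LinearMap.restrictScalars_apply,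
      LinearMap.id_apply] at h2 h3 ⊢
    rw [h4, h3] at h2
    rw [map_smul]
    refine Eq.trans ?_ h2
    simp [πp, LocalizedModule.mkLinearMap_apply, LocalizedModule.map_mk]
  obtain ⟨t, ht⟩ := Module.Finite.exists_smul_of_comp_eq_of_isLocalizedModule S
    (LocalizedModule.mkLinearMap S M) _ _ key
  refine ⟨(t : R) * s, (t * s).2, (t : R) • g, ?_⟩
  rw [LinearMap.comp_smul, mul_smul]
  exact ht

/-- torsion module without socle vanishes -/
lemma socle {R : Type u} [CommRing R] [IsNoetherianRing R] [IsLocalRing R]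
    (E : Type u) [AddCommGroup E] [Module R E]
    (h0 : ∀ e : E, (∀ a ∈ IsLocalRing.maximalIdeal R, a • e = 0) → e = 0)
    (hann : ∀ (p : Ideal R) [p.IsPrime], p ≠ IsLocalRing.maximalIdeal R →
      ∃ s ∉ p, ∀ e : E, s • e = 0) (e : E) : e = 0 := by
  have hI : IsLocalRing.maximalIdeal R ≤ (Module.annihilator R E).radical := by
    rw [Ideal.radical_eq_sInf]
    refine le_sInf fun p ⟨hp, hpp⟩ => ?_
    by_contra hne
    obtain ⟨s, hs, h⟩ := hann p (fun h => hne h.ge)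
    exact hs (hp (Module.mem_annihilator.mpr h))
  obtain ⟨n, hn⟩ := Ideal.exists_pow_le_of_le_radical_of_fg hI (IsNoetherian.noetherian _)
  have key : ∀ n : ℕ, ∀ e : E, (∀ a ∈ IsLocalRing.maximalIdeal R ^ n, a • e = 0) → e = 0 := by
    intro n
    induction n with
    | zero => intro e he; simpa using he 1 (by simp)
    | succ n ih =>
      intro e he
      refine ih e fun a ha => h0 _ fun b hb => ?_
      rw [smul_smul]
      exact he _ (by rw [pow_succ']; exact Ideal.mul_mem_mul hb ha)
  exact key n e fun a ha => Module.mem_annihilator.mp (hn ha) e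

lemma desc {R : Type u} [CommRing R] {A B M : Type u} [AddCommGroup A] [Module R A]
    [AddCommGroup B] [Module R B] [AddCommGroup M] [Module R M] (π : A →ₗ[R] B)
    (hπ : Function.Surjective π) (f : A →ₗ[R] M) (hf : LinearMap.ker π ≤ LinearMap.ker f) :
    ∃ g : B →ₗ[R] M, g ∘ₗ π = f := by
  refine ⟨(LinearMap.ker π).liftQ f hf ∘ₗ
    (π.quotKerEquivOfSurjective hπ).symm.toLinearMap, ?_⟩
  refine LinearMap.ext fun v => ?_
  rw [LinearMap.comp_apply, LinearMap.comp_apply]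
  have : (π.quotKerEquivOfSurjective hπ).symm (π v) = (LinearMap.ker π).mkQ v := by
    rw [LinearEquiv.symm_apply_eq]; rfl
  rw [LinearEquiv.coe_coe, this]
  rfl

/-- restriction map -/
abbrev res {R : Type u} [CommRing R] {M F : Type u} [AddCommGroup M] [Module R M]
    [AddCommGroup F] [Module R F] (π : F →ₗ[R] M) :
    (F →ₗ[R] M) →ₗ[R] ((LinearMap.ker π) →ₗ[R] M) :=
  LinearMap.lcomp R M (LinearMap.ker π).subtype

lemma core {R : Type u} [CommRing R] [IsNoetherianRing R] [IsLocalRing R]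
    (M : Type u) [AddCommGroup M] [Module R M] [Module.Finite R M]
    (hloc : ∀ (p : Ideal R) [p.IsPrime], p ≠ IsLocalRing.maximalIdeal R →
      Module.Free (Localization.AtPrime p) (LocalizedModule p.primeCompl M))
    (hdepthM : ∃ x y : R, x ∈ IsLocalRing.maximalIdeal R ∧ y ∈ IsLocalRing.maximalIdeal R ∧
      RingTheory.Sequence.IsRegular M [x, y])
    (hdepthHom : ∃ x y z : R, x ∈ IsLocalRing.maximalIdeal R ∧
      y ∈ IsLocalRing.maximalIdeal R ∧ z ∈ IsLocalRing.maximalIdeal R ∧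
      RingTheory.Sequence.IsRegular (M →ₗ[R] M) [x, y, z])
    (n : ℕ) (π : (Fin n → R) →ₗ[R] M) (hπ : Function.Surjective π)
    (φ : LinearMap.ker π →ₗ[R] M) : ∃ ψ : (Fin n → R) →ₗ[R] M,
      ψ ∘ₗ (LinearMap.ker π).subtype = φ := by
  obtain ⟨x, y, hx, hy, hM⟩ := hdepthM
  obtain ⟨x', y', z', hx', hy', hz', hH⟩ := hdepthHom
  let K := ModuleCat.of R (R ⧸ IsLocalRing.maximalIdeal R)
  let C := LinearMap.range (res π)
  have e1 : Subsingleton (Ext K (ModuleCat.of R ((Fin n → R) →ₗ[R] M)) 1) :=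
    ext_pi K M n 1 (ext_vanish M [x, y] (by
      simpa only [List.forall_mem_cons, List.not_mem_nil, false_implies, implies_true, and_true]
        using ⟨hx, hy⟩) hM 1 (by simp))
  have e2 : Subsingleton (Ext K (ModuleCat.of R (M →ₗ[R] M)) 2) :=
    ext_vanish (M →ₗ[R] M) [x', y', z'] (by
      simpa only [List.forall_mem_cons, List.not_mem_nil, false_implies, implies_true, and_true]
        using ⟨hx', hy', hz'⟩) hH 2 (by simp)
  -- first short exact sequence
  have ex1 : Function.Exact (LinearMap.lcomp R M π) (res π).rangeRestrict := by
    intro f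
    constructor
    · intro hf
      have hf' : LinearMap.ker π ≤ LinearMap.ker f := by
        intro v hv
        exact LinearMap.congr_fun (congrArg Subtype.val hf) ⟨v, hv⟩
      exact desc π hπ f hf'
    · rintro ⟨g, rfl⟩
      ext v
      have : π v = 0 := v.2
      simp [this]
  let S1 : ShortComplex (ModuleCat.{u} R) :=
    ShortComplex.mk (ModuleCat.ofHom (LinearMap.lcomp R M π))
      (ModuleCat.ofHom (res π).rangeRestrict)
      (by rw [← ModuleCat.ofHom_comp, ex1.linearMap_comp_eq_zero]; rfl)
  have hS1 : S1.ShortExact :=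
    { exact := (ShortComplex.ShortExact.moduleCat_exact_iff_function_exact _).mpr ex1
      mono_f := (ModuleCat.mono_iff_injective _).mpr (LinearMap.lcomp_injective_of_surjective π hπ)
      epi_g := (ModuleCat.epi_iff_surjective _).mpr (LinearMap.surjective_rangeRestrict _) }
  have e3 : Subsingleton (Ext K (ModuleCat.of R C) 1) := by
    refine subsingleton_of_forall_eq 0 fun α => ?_
    obtain ⟨β, hβ⟩ := Ext.covariant_sequence_exact₃ K hS1 (α : Ext K S1.X₃ 1) (n₁ := 2) rfl
      (e2.elim _ _)
    have : β = 0 := e1.elim _ _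
    rw [← hβ, this, Ext.zero_comp]
  have ex2 : Function.Exact C.subtype C.mkQ := LinearMap.exact_subtype_mkQ C
  let S2 : ShortComplex (ModuleCat.{u} R) :=
    ShortComplex.mk (ModuleCat.ofHom C.subtype) (ModuleCat.ofHom C.mkQ)
      (by rw [← ModuleCat.ofHom_comp, ex2.linearMap_comp_eq_zero]; rfl)
  have hS2 : S2.ShortExact :=
    { exact := (ShortComplex.ShortExact.moduleCat_exact_iff_function_exact _).mpr ex2
      mono_f := (ModuleCat.mono_iff_injective _).mpr C.injective_subtype
      epi_g := (ModuleCat.epi_iff_surjective _).mpr C.mkQ_surjective }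
  have xreg : IsSMulRegular M x := ((RingTheory.Sequence.isRegular_cons_iff _ _ _).mp hM).1
  have xreg' : IsSMulRegular (LinearMap.ker π →ₗ[R] M) x := by
    intro f g h
    ext v
    exact xreg (LinearMap.congr_fun h v)
  have e4 : Subsingleton (Ext K (ModuleCat.of R (LinearMap.ker π →ₗ[R] M)) 0) := by
    have : Subsingleton ((R ⧸ IsLocalRing.maximalIdeal R) →ₗ[R] (LinearMap.ker π →ₗ[R] M)) :=
      xreg'.linearMap_subsingleton_of_mem_annihilator (by rwa [Ideal.annihilator_quotient])
    exact (Ext.addEquiv₀.trans ModuleCat.homAddEquiv).subsingleton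
  have e5 : Subsingleton (Ext K (ModuleCat.of R (_ ⧸ C)) 0) := by
    refine subsingleton_of_forall_eq 0 fun α => ?_
    obtain ⟨β, hβ⟩ := Ext.covariant_sequence_exact₃ K hS2 (α : Ext K S2.X₃ 0) (n₁ := 1) rfl
      (e3.elim _ _)
    have : β = 0 := e4.elim _ _
    rw [← hβ, this, Ext.zero_comp]
  have e6 : Subsingleton ((R ⧸ IsLocalRing.maximalIdeal R) →ₗ[R] (_ ⧸ C)) :=
    (Ext.addEquiv₀.trans (ModuleCat.homAddEquiv (M := K)
      (N := ModuleCat.of R (_ ⧸ C)))).symm.subsingleton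
  have fin : C.mkQ φ = 0 := by
    refine socle (R := R) (_ ⧸ C) ?_ ?_ _
    · intro e he
      let l := (IsLocalRing.maximalIdeal R).liftQ (LinearMap.toSpanSingleton R (_ ⧸ C) e)
        (fun a ha => by simpa using he a ha)
      have : l ((IsLocalRing.maximalIdeal R).mkQ 1) = 0 := by rw [e6.elim l 0]; rfl
      have h1 : (1 : R) • e = 0 := this
      simpa using h1
    · intro p _ hp
      obtain ⟨s, hs, g, hg⟩ := exists_section M _ π hπ p (hloc p hp)
      refine ⟨s, hs, fun e => ?_⟩
      obtain ⟨f, rfl⟩ := C.mkQ_surjective e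
      rw [← map_smul, Submodule.mkQ_apply, Submodule.Quotient.mk_eq_zero]
      refine ⟨f ∘ₗ LinearMap.codRestrict (LinearMap.ker π) (s • LinearMap.id - g ∘ₗ π) ?_, ?_⟩
      · intro v
        have := LinearMap.congr_fun hg (π v)
        simp at this
        simp [this]
      · ext v
        have hv : π v = 0 := v.2
        simp only [LinearMap.lcomp_apply, LinearMap.comp_apply, LinearMap.smul_apply, ← map_smul]
        congr 1
        ext1
        simp [hv]
  rw [Submodule.mkQ_apply, Submodule.Quotient.mk_eq_zero] at fin
  exact fin

/-- transfer from finite free cover to any cover -/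
lemma transfer {R : Type u} [CommRing R]
    {M F P : Type u} [AddCommGroup M] [Module R M]
    [AddCommGroup F] [Module R F] [AddCommGroup P] [Module R P]
    [Module.Projective R F] [Module.Projective R P]
    (π : F →ₗ[R] M) (hπ : Function.Surjective π) (ρ : P →ₗ[R] M) (hρ : Function.Surjective ρ)
    (h : ∀ φ : LinearMap.ker π →ₗ[R] M, ∃ ψ : F →ₗ[R] M, ψ ∘ₗ (LinearMap.ker π).subtype = φ)
    (φ : LinearMap.ker ρ →ₗ[R] M) : ∃ ψ : P →ₗ[R] M, ψ ∘ₗ (LinearMap.ker ρ).subtype = φ := by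
  obtain ⟨u, hu⟩ := Module.projective_lifting_property ρ π hρ
  obtain ⟨v, hv⟩ := Module.projective_lifting_property π ρ hπ
  have hu' : ∀ a, ρ (u a) = π a := LinearMap.congr_fun hu
  have hv' : ∀ a, π (v a) = ρ a := LinearMap.congr_fun hv
  obtain ⟨ψ, hψ⟩ := h (φ ∘ₗ u.restrict (p := LinearMap.ker π) (q := LinearMap.ker ρ)
    (fun a ha => by simpa [hu'] using ha))
  refine ⟨φ ∘ₗ LinearMap.codRestrict (LinearMap.ker ρ) (LinearMap.id - u ∘ₗ v)
    (fun a => by simp [hu', hv']) + ψ ∘ₗ v, ?_⟩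
  ext a
  have ha : ρ a = 0 := a.2
  have := LinearMap.congr_fun hψ ⟨v a, by simp [hv', ha]⟩
  simp only [LinearMap.comp_apply, Submodule.subtype_apply] at this
  simp only [LinearMap.comp_apply, Submodule.subtype_apply, LinearMap.add_apply, this]
  rw [← map_add]
  congr 1
  ext1
  simp

end Aux18

/-- Let `(R,𝔪)` be a noetherian local ring and `M` a finitely generated
`R`-module which is locally free on the punctured spectrum (for every prime `𝔭 ≠ 𝔪` the
localization `M_𝔭` is free over `R_𝔭`). Assume there is an `M`-regular sequence of length
two of elements of `𝔪`, and a `Hom_R(M,M)`-regular sequence of length three of elements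
of `𝔪`. Then `Ext¹_R(M,M) = 0`. -/
theorem stmt18 (R : Type u) [CommRing R] [IsNoetherianRing R] [IsLocalRing R]
    (M : Type u) [AddCommGroup M] [Module R M] [Module.Finite R M]
    (hloc : ∀ (p : Ideal R) [p.IsPrime], p ≠ IsLocalRing.maximalIdeal R →
      Module.Free (Localization.AtPrime p) (LocalizedModule p.primeCompl M))
    (hdepthM : ∃ x y : R, x ∈ IsLocalRing.maximalIdeal R ∧ y ∈ IsLocalRing.maximalIdeal R ∧
      RingTheory.Sequence.IsRegular M [x, y])
    (hdepthHom : ∃ x y z : R, x ∈ IsLocalRing.maximalIdeal R ∧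
      y ∈ IsLocalRing.maximalIdeal R ∧ z ∈ IsLocalRing.maximalIdeal R ∧
      RingTheory.Sequence.IsRegular (M →ₗ[R] M) [x, y, z]) :
    Subsingleton (((Ext R (ModuleCat R) 1).obj
      (Opposite.op (ModuleCat.of R M))).obj (ModuleCat.of R M)) := by
  obtain ⟨n, π, hπ⟩ := Module.Finite.exists_fin' R M
  let P := ProjectiveResolution.of (ModuleCat.of R M)
  suffices h : Limits.IsZero ((P.complex.linearYonedaObj R (ModuleCat.of R M)).homology 1) from
    ModuleCat.subsingleton_of_isZero (h.of_iso (P.isoExt 1 (ModuleCat.of R M)))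
  rw [← HomologicalComplex.exactAt_iff_isZero_homology,
    HomologicalComplex.exactAt_iff' _ 0 1 2 (by simp) (by simp), ShortComplex.moduleCat_exact_iff]
  intro f hf
  have hf' : P.complex.d 2 1 ≫ (f : P.complex.X 1 ⟶ ModuleCat.of R M) = 0 := hf
  suffices h : ∃ g : P.complex.X 0 ⟶ ModuleCat.of R M, P.complex.d 1 0 ≫ g = f from h
  let ρ : P.complex.X 0 →ₗ[R] M := (P.π.f 0).hom
  have hρ : Function.Surjective ρ := (ModuleCat.epi_iff_surjective (P.π.f 0)).mp inferInstance
  have hex0 := (ShortComplex.moduleCat_exact_iff _).mp P.exact₀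
  have hex1 := (ShortComplex.moduleCat_exact_iff _).mp (P.exact_succ 0)
  have hproj : Module.Projective R (P.complex.X 0) :=
    (IsProjective.iff_projective _).mpr (P.projective 0)
  let σ : P.complex.X 1 →ₗ[R] LinearMap.ker ρ :=
    LinearMap.codRestrict (LinearMap.ker ρ) (P.complex.d 1 0).hom
      (fun a => LinearMap.congr_fun (congrArg ModuleCat.Hom.hom P.complex_d_comp_π_f_zero) a)
  have hσ : Function.Surjective σ := by
    rintro ⟨b, hb⟩
    obtain ⟨a, ha⟩ := hex0 b hb
    exact ⟨a, Subtype.ext ha⟩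
  obtain ⟨φ, hφ⟩ := Aux18.desc σ hσ (ModuleCat.Hom.hom
      (f : P.complex.X 1 ⟶ ModuleCat.of R M)) (by
    intro a ha
    obtain ⟨c, hc⟩ := hex1 a (congrArg Subtype.val ha)
    have hc' : (P.complex.d 2 1).hom c = a := hc
    rw [LinearMap.mem_ker, ← hc']
    exact LinearMap.congr_fun (congrArg ModuleCat.Hom.hom hf') c)
  obtain ⟨ψ, hψ⟩ := Aux18.transfer π hπ ρ hρ
    (Aux18.core M hloc hdepthM hdepthHom n π hπ) φ
  refine ⟨ModuleCat.ofHom ψ, ?_⟩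
  apply ModuleCat.hom_ext
  rw [← hφ, ← hψ]
  rfl
end
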